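/- Let p*_0 be the solution of the massless pressure equation with p*_0(0) = 1, let ρ*_0 = p*_0 (the massless equation of state is p = ρ), and let m*_0(r) = 4π∫₀^r s² p*_0(s) ds. Then for every γ ∈ (0,1) there exists a constant C > 0 such that |r² ρ*_0(r) − 1/(16π)| + |m*_0(r)/r − 1/4| ≤ C r^{−γ} for all r > 0. -/

import Mathlib

/-!
With `m(r) = 4π ∫₀^r s² p`, set `y = 1/(1 - 2m/r)` and `w = 4π r² p · y`. In the variable
`t = log r` the pressure equation becomes the Lotka–Volterra system with logistic damping

  `y' = y (2w - y + 1)`,  `w' = w (4 - 2y)`    (`lv_system`),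

whose positive equilibrium `(2, 1/2)` corresponds to `r² p = 1/(16π)`, `m/r = 1/4`.

Its Lyapunov function `E = 4 f(y/2) + f(2w)`, `f(x) = x - 1 - log x`, has derivative `-2 (y-2)²`
along trajectories. Since a bound on `E` bounds `y` from above and `w` from below, the solution
cannot reach a point where `p = 0` or `2m/r = 1` (`good_everywhere`), so the system holds for all
`t`. Adding to `E` a small multiple of `-(y-2)(2w-1)` gives a strict Lyapunov function, comparable
to the squared distance from the equilibrium, hence convergence (`lv_tendsto`). Near the
equilibrium the quadratic form `a² - ab + b²`, `a = y - 2`, `b = 2w - 1`, decays like `exp(-2γt)`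
for every `γ < 1`, because the linearised system has eigenvalues `-1 ± i√3` (`lv_rate`). This is
the decay `r^(-γ)` for large `r`; on a bounded interval of radii the left-hand side is bounded
and `r^(-γ)` is bounded below.
-/

open Real MeasureTheory Set

/-- Hard phase density in terms of pressure: `S(p) = p + 1` (since `ρ = p + 1`). -/
noncomputable def Shard (x : ℝ) : ℝ := x + 1

/-- Right hand side of the hard phase steady state pressure equation
`p′(r) = −((S(p)+p)/(1 − (8π/r)∫₀^r s²S(p)))((4π/r²)∫₀^r s²S(p) + 4π r p)`. -/
noncomputable def rhsHard (p : ℝ → ℝ) (r : ℝ) : ℝ :=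
  -((Shard (p r) + p r) / (1 - (8 * Real.pi / r) * ∫ s in (0:ℝ)..r, s^2 * Shard (p s))) *
    ((4 * Real.pi / r^2) * (∫ s in (0:ℝ)..r, s^2 * Shard (p s)) + 4 * Real.pi * r * p r)

/-- Right hand side of the massless pressure equation (with `S*(p) = p`):
`p′(r) = −(2p/(1 − (8π/r)∫₀^r s²p))((4π/r²)∫₀^r s²p + 4π r p)`. -/
noncomputable def rhsStar (p : ℝ → ℝ) (r : ℝ) : ℝ :=
  -((2 * p r) / (1 - (8 * Real.pi / r) * ∫ s in (0:ℝ)..r, s^2 * p s)) *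
    ((4 * Real.pi / r^2) * (∫ s in (0:ℝ)..r, s^2 * p s) + 4 * Real.pi * r * p r)

/-! ### The Lotka–Volterra system -/

/-- `f(x) = x - 1 - log x`, nonnegative on `(0, ∞)` and vanishing only at `x = 1`. -/
noncomputable def logGap (x : ℝ) : ℝ := x - 1 - Real.log x

lemma logGap_lower {x : ℝ} (hx : 0 < x) : (x - 1)^2 ≤ 2 * (x + 1) * logGap x := by
  have hs : 0 < √x := Real.sqrt_pos.mpr hx
  have hsq : √x ^ 2 = x := Real.sq_sqrt hx.le
  -- `log x = 2 log √x ≤ 2 (√x - 1)`, hence `logGap x ≥ (√x - 1)²`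
  have h1 : Real.log x = 2 * Real.log (√x) := by rw [Real.log_sqrt hx.le]; ring
  have h2 := Real.log_le_sub_one_of_pos hs
  have h3 : (√x - 1)^2 ≤ logGap x := by unfold logGap; nlinarith
  have h4 : (x - 1)^2 = (√x + 1)^2 * (√x - 1)^2 := by
    nth_rewrite 1 [← hsq]; ring
  have h5 : (√x + 1)^2 ≤ 2 * (x + 1) := by nlinarith [sq_nonneg (√x - 1)]
  rw [h4]
  exact mul_le_mul h5 h3 (sq_nonneg _) (by positivity)

lemma logGap_nonneg {x : ℝ} (hx : 0 < x) : 0 ≤ logGap x := by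
  unfold logGap; linarith [Real.log_le_sub_one_of_pos hx]

lemma logGap_upper {x : ℝ} (hx : 0 < x) : logGap x ≤ (x - 1)^2 / x := by
  have h := Real.one_sub_inv_le_log_of_pos hx
  have : (x - 1)^2 / x = x - 2 + x⁻¹ := by field_simp; ring
  rw [this]; unfold logGap; linarith

lemma le_of_logGap_le {x K : ℝ} (hx : 0 < x) (h : logGap x ≤ K) : x ≤ 2 * (K + 1) := by
  -- `log (x/2) ≤ x/2 - 1` and `log 2 ≤ 1`
  have h1 := Real.log_le_sub_one_of_pos (half_pos hx)
  rw [Real.log_div hx.ne' two_ne_zero] at h1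
  have h2 := Real.log_le_sub_one_of_pos (zero_lt_two' ℝ)
  unfold logGap at h
  linarith

lemma exp_le_of_logGap_le {x K : ℝ} (hx : 0 < x) (h : logGap x ≤ K) :
    Real.exp (-(K + 1)) ≤ x := by
  rw [← Real.le_log_iff_exp_le hx]
  unfold logGap at h
  linarith

/-- The Lyapunov function of the Lotka–Volterra system `y' = y (2w - y + 1)`,
`w' = w (4 - 2y)`, normalised to vanish at the equilibrium `(y, w) = (2, 1/2)`. -/
noncomputable def lvE (y w : ℝ) : ℝ := 4 * logGap (y / 2) + logGap (2 * w)

lemma hasDerivAt_lvE {y w : ℝ → ℝ} {t : ℝ}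
    (hy : HasDerivAt y (y t * (2 * w t - y t + 1)) t)
    (hw : HasDerivAt w (w t * (4 - 2 * y t)) t) (hy0 : 0 < y t) (hw0 : 0 < w t) :
    HasDerivAt (fun t => lvE (y t) (w t)) (-2 * (y t - 2)^2) t := by
  unfold lvE logGap
  have h1 := ((((hy.div_const 2).sub_const 1).sub
    ((hy.div_const 2).log (by positivity))).const_mul 4)
  have h2 := (((hw.const_mul 2).sub_const 1).sub
    ((hw.const_mul 2).log (by positivity)))
  refine (h1.add h2).congr_deriv ?_
  field_simp
  ring

lemma lvE_le {y w : ℝ → ℝ} {a b : ℝ} (hab : a ≤ b)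
    (hy : ∀ t ∈ Icc a b, HasDerivAt y (y t * (2 * w t - y t + 1)) t)
    (hw : ∀ t ∈ Icc a b, HasDerivAt w (w t * (4 - 2 * y t)) t)
    (hy0 : ∀ t ∈ Icc a b, 0 < y t) (hw0 : ∀ t ∈ Icc a b, 0 < w t) :
    lvE (y b) (w b) ≤ lvE (y a) (w a) := by
  have hd : ∀ t ∈ Icc a b, HasDerivAt (fun t => lvE (y t) (w t)) (-2 * (y t - 2)^2) t :=
    fun t ht => hasDerivAt_lvE (hy t ht) (hw t ht) (hy0 t ht) (hw0 t ht)
  have : AntitoneOn (fun t => lvE (y t) (w t)) (Icc a b) := by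
    refine antitoneOn_of_deriv_nonpos (convex_Icc a b)
      (fun t ht => (hd t ht).continuousAt.continuousWithinAt)
      (fun t ht => (hd t (interior_subset ht)).differentiableAt.differentiableWithinAt) ?_
    intro t ht
    rw [(hd t (interior_subset ht)).deriv]
    nlinarith [sq_nonneg (y t - 2)]
  exact this (left_mem_Icc.mpr hab) (right_mem_Icc.mpr hab) hab

/-- A priori bounds carried by a sublevel set of the Lyapunov function. -/
lemma lv_bounds {y w K : ℝ} (hy : 0 < y) (hw : 0 < w) (h : lvE y w ≤ K) :
    y ≤ 4 * (K + 1) ∧ 2 * w ≤ 2 * (K + 1) ∧ Real.exp (-(K + 1)) ≤ 2 * w := by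
  have h1 := logGap_nonneg (half_pos hy)
  have h2 := logGap_nonneg (show 0 < 2 * w by positivity)
  unfold lvE at h
  have h3 : logGap (y / 2) ≤ K := by linarith
  have h4 : logGap (2 * w) ≤ K := by linarith
  have h5 := le_of_logGap_le (half_pos hy) h3
  exact ⟨by linarith, le_of_logGap_le (by positivity) h4, exp_le_of_logGap_le (by positivity) h4⟩

/-- Differential form of Grönwall's inequality with a negative rate. -/
lemma exp_decay {f f' : ℝ → ℝ} {c T : ℝ} (hf : ∀ t ≥ T, HasDerivAt f (f' t) t)
    (hle : ∀ t ≥ T, f' t ≤ -c * f t) {t : ℝ} (ht : T ≤ t) :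
    f t ≤ f T * Real.exp (c * T) * Real.exp (-c * t) := by
  have hd : ∀ s ≥ T, HasDerivAt (fun s => f s * Real.exp (c * s))
      ((f' s + c * f s) * Real.exp (c * s)) s := by
    intro s hs
    refine ((hf s hs).mul (((hasDerivAt_id s).const_mul c).exp)).congr_deriv ?_
    simp only [id]; ring
  have hanti : AntitoneOn (fun s => f s * Real.exp (c * s)) (Ici T) := by
    refine antitoneOn_of_deriv_nonpos (convex_Ici T)
      (fun s hs => (hd s hs).continuousAt.continuousWithinAt)
      (fun s hs => (hd s (interior_subset hs)).differentiableAt.differentiableWithinAt) ?_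
    intro s hs
    rw [(hd s (interior_subset hs)).deriv]
    have := hle s (interior_subset hs)
    exact mul_nonpos_of_nonpos_of_nonneg (by linarith) (Real.exp_pos _).le
  have h := hanti self_mem_Ici (show t ∈ Ici T from ht) ht
  have h' : f t = f t * Real.exp (c * t) * Real.exp (-c * t) := by
    rw [mul_assoc, ← Real.exp_add]; simp
  rw [h']
  exact mul_le_mul_of_nonneg_right h (Real.exp_pos _).le

/-- Convergence to the equilibrium. The function `E - κ (y - 2)(2w - 1)` is, for small `κ`,
comparable to the squared distance to the equilibrium and strictly decreasing at a rate
proportional to it. -/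
lemma lv_tendsto {y w : ℝ → ℝ}
    (hy : ∀ t, HasDerivAt y (y t * (2 * w t - y t + 1)) t)
    (hw : ∀ t, HasDerivAt w (w t * (4 - 2 * y t)) t)
    (hy1 : ∀ t, 1 ≤ y t) (hw0 : ∀ t, 0 < w t) :
    Filter.Tendsto (fun t => (y t - 2)^2 + (2 * w t - 1)^2) Filter.atTop (nhds 0) := by
  have hy0 : ∀ t, 0 < y t := fun t => by linarith [hy1 t]
  obtain ⟨K, hK⟩ : ∃ K, K = lvE (y 0) (w 0) := ⟨_, rfl⟩
  have hK0 : 0 ≤ K := by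
    rw [hK]; unfold lvE
    have h1 := logGap_nonneg (half_pos (hy0 0))
    have h2 := logGap_nonneg (show 0 < 2 * w 0 by linarith [hw0 0])
    linarith
  have hE : ∀ t ≥ 0, lvE (y t) (w t) ≤ K := fun t ht => hK ▸
    lvE_le ht (fun s _ => hy s) (fun s _ => hw s) (fun s _ => hy0 s) (fun s _ => hw0 s)
  obtain ⟨N, hN⟩ : ∃ N, N = 2 * (K + 1) := ⟨_, rfl⟩
  have hN2 : 2 ≤ N := by linarith
  obtain ⟨n, hn⟩ : ∃ n, n = Real.exp (-(K + 1)) := ⟨_, rfl⟩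
  have hn0 : 0 < n := hn ▸ Real.exp_pos _
  have hb : ∀ t ≥ 0, y t ≤ 2 * N ∧ 2 * w t ≤ N ∧ n ≤ 2 * w t := by
    intro t ht
    obtain ⟨h1, h2, h3⟩ := lv_bounds (hy0 t) (hw0 t) (hE t ht)
    exact ⟨by linarith, by linarith, by rw [hn]; exact h3⟩
  have hEl : ∀ t ≥ 0, ((y t - 2)^2 + (2 * w t - 1)^2) ≤ 2 * (N + 1) * lvE (y t) (w t) := by
    intro t ht
    obtain ⟨h1, h2, -⟩ := hb t ht
    have e1 := logGap_lower (half_pos (hy0 t))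
    have e2 := logGap_lower (show 0 < 2 * w t by linarith [hw0 t])
    have f1 := logGap_nonneg (half_pos (hy0 t))
    have f2 := logGap_nonneg (show 0 < 2 * w t by linarith [hw0 t])
    unfold lvE
    nlinarith [mul_le_mul_of_nonneg_right h1 f1, mul_le_mul_of_nonneg_right h2 f2]
  have hEu : ∀ t ≥ 0, lvE (y t) (w t) ≤ (2 + 1 / n) * ((y t - 2)^2 + (2 * w t - 1)^2) := by
    intro t ht
    obtain ⟨-, -, h3⟩ := hb t ht
    have e1 := logGap_upper (half_pos (hy0 t))
    have e2 := logGap_upper (show 0 < 2 * w t by linarith [hw0 t])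
    have e3 : (y t / 2 - 1)^2 / (y t / 2) ≤ (y t - 2)^2 / 2 := by
      rw [div_le_div_iff₀ (half_pos (hy0 t)) two_pos]
      nlinarith [mul_le_mul_of_nonneg_left (hy1 t) (sq_nonneg (y t - 2))]
    have e4 : (2 * w t - 1)^2 / (2 * w t) ≤ 1 / n * (2 * w t - 1)^2 := by
      rw [div_eq_mul_one_div, mul_comm]
      exact mul_le_mul_of_nonneg_right (one_div_le_one_div_of_le hn0 h3) (sq_nonneg _)
    have e5 : 0 ≤ 1 / n * (y t - 2)^2 := by positivity
    unfold lvE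
    nlinarith [sq_nonneg (2 * w t - 1)]
  obtain ⟨κ, hκ⟩ : ∃ κ, κ = 1 / (3 * (N + 1)) := ⟨_, rfl⟩
  have hκ0 : 0 < κ := by rw [hκ]; positivity
  have hκN : κ * (3 * (N + 1)) = 1 := by rw [hκ]; field_simp
  obtain ⟨L, hL⟩ : ∃ L : ℝ → ℝ,
      L = fun t => lvE (y t) (w t) - κ * ((y t - 2) * (2 * w t - 1)) := ⟨_, rfl⟩
  have hLd : ∀ t, HasDerivAt L (-2 * (y t - 2)^2
      - κ * (y t * (2 * w t - 1)^2 - y t * ((y t - 2) * (2 * w t - 1))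
          - 2 * (y t - 2)^2 * (2 * w t))) t := by
    intro t
    rw [hL]
    refine ((hasDerivAt_lvE (hy t) (hw t) (hy0 t) (hw0 t)).sub
      ((((hy t).sub_const 2).mul (((hw t).const_mul 2).sub_const 1)).const_mul κ)).congr_deriv ?_
    ring
  have hLl : ∀ t ≥ 0, κ * ((y t - 2)^2 + (2 * w t - 1)^2) ≤ L t := by
    intro t ht
    have e1 := mul_le_mul_of_nonneg_left (hEl t ht) hκ0.le
    have e2 : κ * (2 * (N + 1) * lvE (y t) (w t)) = 2 / 3 * lvE (y t) (w t) := by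
      linear_combination (2 / 3 * lvE (y t) (w t)) * hκN
    have e3 : 0 ≤ κ * ((y t - 2) - (2 * w t - 1))^2 := by positivity
    rw [hL]; dsimp only
    nlinarith
  obtain ⟨M, hM⟩ : ∃ M, M = 2 + 1 / n := ⟨_, rfl⟩
  have hM0 : 0 < M := by rw [hM]; positivity
  have hLu : ∀ t ≥ 0, L t ≤ (M + κ) * ((y t - 2)^2 + (2 * w t - 1)^2) := by
    intro t ht
    have e1 := hEu t ht
    rw [← hM] at e1
    have e3 : 0 ≤ κ * ((y t - 2) + (2 * w t - 1))^2 := by positivity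
    have e4 : 0 ≤ κ * ((y t - 2)^2 + (2 * w t - 1)^2) := by positivity
    rw [hL]; dsimp only
    nlinarith
  obtain ⟨c, hc⟩ : ∃ c, c = κ / (2 * (M + κ)) := ⟨_, rfl⟩
  have hc0 : 0 < c := by rw [hc]; positivity
  have hcM : c * (M + κ) = κ / 2 := by rw [hc]; field_simp
  have hdec : ∀ t ≥ 0, -2 * (y t - 2)^2
      - κ * (y t * (2 * w t - 1)^2 - y t * ((y t - 2) * (2 * w t - 1))
          - 2 * (y t - 2)^2 * (2 * w t)) ≤ -c * L t := by
    intro t ht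
    obtain ⟨h1, h2, -⟩ := hb t ht
    have e1 := mul_le_mul_of_nonneg_left (hLu t ht) hc0.le
    rw [← mul_assoc, hcM] at e1
    generalize ha : y t - 2 = a at *
    generalize hbb : 2 * w t - 1 = b at *
    have g1 : 0 ≤ y t * (b - a)^2 := mul_nonneg (hy0 t).le (sq_nonneg _)
    have g2 : b^2 ≤ y t * b^2 := by nlinarith [hy1 t, sq_nonneg b]
    have g3 : y t * a^2 ≤ 2 * N * a^2 := mul_le_mul_of_nonneg_right h1 (sq_nonneg _)
    have g4 : a^2 * (2 * w t) ≤ a^2 * N := mul_le_mul_of_nonneg_left h2 (sq_nonneg _)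
    have g5 : b^2 / 2 - 3 * N * a^2 ≤ y t * b^2 - y t * (a * b) - 2 * a^2 * (2 * w t) := by
      nlinarith
    have g6 := mul_le_mul_of_nonneg_left g5 hκ0.le
    have g7 : κ * (b^2 / 2 - 3 * N * a^2) = κ / 2 * b^2 - a^2 + 3 * κ * a^2 := by
      linear_combination (-a^2) * hκN
    have g8 : 0 ≤ κ * a^2 := by positivity
    have g9 : κ ≤ 1 := by nlinarith
    have g10 : κ * a^2 ≤ a^2 := by nlinarith [sq_nonneg a]
    nlinarith
  have hup : ∀ t ≥ 0, (y t - 2)^2 + (2 * w t - 1)^2 ≤ L 0 / κ * Real.exp (-(c * t)) := by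
    intro t ht
    have e1 := exp_decay (T := 0) (fun s _ => hLd s) hdec ht
    have e2 := hLl t ht
    rw [div_mul_eq_mul_div, le_div_iff₀ hκ0]
    simp only [mul_zero, Real.exp_zero, mul_one, neg_mul] at e1
    linarith
  have hlim : Filter.Tendsto (fun t => L 0 / κ * Real.exp (-(c * t))) Filter.atTop (nhds 0) := by
    have h := (Real.tendsto_exp_neg_atTop_nhds_zero.comp
      (Filter.tendsto_id.const_mul_atTop hc0)).const_mul (L 0 / κ)
    rw [mul_zero] at h
    exact h
  refine squeeze_zero' (Filter.Eventually.of_forall fun t => by positivity) ?_ hlim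
  filter_upwards [Filter.eventually_ge_atTop 0] with t ht using hup t ht

/-- The exponential rate. The linearisation at the equilibrium has eigenvalues `-1 ± i√3`, and
`Q = a² - a b + b²` with `a = y - 2`, `b = 2w - 1` satisfies `Q' = -2 Q` up to cubic terms. -/
lemma lv_rate {y w : ℝ → ℝ}
    (hy : ∀ t, HasDerivAt y (y t * (2 * w t - y t + 1)) t)
    (hw : ∀ t, HasDerivAt w (w t * (4 - 2 * y t)) t)
    (hy1 : ∀ t, 1 ≤ y t) (hw0 : ∀ t, 0 < w t) {γ : ℝ} (hγ : γ < 1) :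
    ∃ C T : ℝ, 0 ≤ C ∧ ∀ t ≥ T, |y t - 2| + |2 * w t - 1| ≤ C * Real.exp (-γ * t) := by
  obtain ⟨ε, hε⟩ : ∃ ε, ε = (1 - γ) / 8 := ⟨_, rfl⟩
  have hε0 : 0 < ε := by rw [hε]; linarith
  have hev := (lv_tendsto hy hw hy1 hw0).eventually (gt_mem_nhds (show 0 < ε^2 by positivity))
  obtain ⟨T, hT⟩ := Filter.eventually_atTop.mp hev
  obtain ⟨Q, hQ⟩ : ∃ Q : ℝ → ℝ,
      Q = fun t => (y t - 2)^2 - (y t - 2) * (2 * w t - 1) + (2 * w t - 1)^2 := ⟨_, rfl⟩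
  have hQd : ∀ t, HasDerivAt Q (-2 * Q t
      + ((2 * (y t - 2) - (2 * w t - 1)) * (y t - 2) * ((2 * w t - 1) - (y t - 2))
        - 2 * (y t - 2) * (2 * w t - 1) * (2 * (2 * w t - 1) - (y t - 2)))) t := by
    intro t
    rw [hQ]
    have ha := (hy t).sub_const 2
    have hb := ((hw t).const_mul 2).sub_const 1
    refine (((ha.pow 2).sub (ha.mul hb)).add (hb.pow 2)).congr_deriv ?_
    dsimp only
    push_cast
    ring
  have hQle : ∀ t ≥ T, -2 * Q t
      + ((2 * (y t - 2) - (2 * w t - 1)) * (y t - 2) * ((2 * w t - 1) - (y t - 2))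
        - 2 * (y t - 2) * (2 * w t - 1) * (2 * (2 * w t - 1) - (y t - 2))) ≤ -(2 * γ) * Q t := by
    intro t ht
    have h := hT t ht
    rw [hQ]; dsimp only
    generalize y t - 2 = a at *
    generalize 2 * w t - 1 = b at *
    have ha : |a| ≤ ε := abs_le_of_sq_le_sq (by nlinarith [sq_nonneg b]) hε0.le
    have hq : 0 ≤ a^2 + b^2 := by positivity
    have key : (2 * a - b) * a * (b - a) - 2 * a * b * (2 * b - a) ≤ 8 * ε * (a^2 + b^2) := by
      have e : (2 * a - b) * a * (b - a) - 2 * a * b * (2 * b - a)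
          = a * (-2 * a^2 + 5 * (a * b) - 5 * b^2) := by ring
      rw [e]
      have e1 : |-2 * a^2 + 5 * (a * b) - 5 * b^2| ≤ 8 * (a^2 + b^2) := by
        rw [abs_le]
        constructor <;> nlinarith [sq_nonneg (a + b), sq_nonneg (a - b)]
      calc a * (-2 * a^2 + 5 * (a * b) - 5 * b^2)
          ≤ |a| * |-2 * a^2 + 5 * (a * b) - 5 * b^2| := by rw [← abs_mul]; exact le_abs_self _
        _ ≤ ε * (8 * (a^2 + b^2)) := mul_le_mul ha e1 (abs_nonneg _) hε0.le
        _ = _ := by ring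
    have key2 : 8 * ε * (a^2 + b^2) ≤ 2 * (1 - γ) * (a^2 - a * b + b^2) := by
      rw [hε]
      nlinarith [mul_nonneg (show 0 ≤ 1 - γ by linarith) (sq_nonneg (a - b))]
    nlinarith
  have hfin : ∀ t ≥ T, Q t ≤ Q T * Real.exp (2 * γ * T) * Real.exp (-(2 * γ) * t) :=
    fun t ht => exp_decay (fun s _ => hQd s) hQle ht
  have hQ0 : ∀ t, (|y t - 2| + |2 * w t - 1|)^2 ≤ 4 * Q t := by
    intro t
    rw [hQ]; dsimp only
    generalize y t - 2 = a
    generalize 2 * w t - 1 = b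
    have e1 : |a| * |b| ≤ (a^2 + b^2) / 2 := by
      nlinarith [sq_abs a, sq_abs b, sq_nonneg (|a| - |b|)]
    nlinarith [sq_abs a, sq_abs b, sq_nonneg (a - b)]
  obtain ⟨D, hD⟩ : ∃ D, D = 4 * (Q T * Real.exp (2 * γ * T)) := ⟨_, rfl⟩
  have hD0 : 0 ≤ D := by
    have := (sq_nonneg _).trans (hQ0 T)
    rw [hD]
    have := mul_nonneg this (Real.exp_pos (2 * γ * T)).le
    linarith
  refine ⟨√D, T, Real.sqrt_nonneg _, fun t ht => ?_⟩
  refine le_of_sq_le_sq ?_ (by positivity)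
  rw [mul_pow, Real.sq_sqrt hD0, ← Real.exp_nat_mul,
    show ((2:ℕ):ℝ) * (-γ * t) = -(2 * γ) * t by push_cast; ring, hD]
  linarith [hQ0 t, hfin t ht]

/-! ### Reduction of the pressure equation -/

/-- The integral `∫₀^r s² p(s) ds`, i.e. the mass divided by `4π`. -/
noncomputable def massInt (p : ℝ → ℝ) (r : ℝ) : ℝ := ∫ s in (0:ℝ)..r, s^2 * p s

/-- The variable `y = 1 / (1 - 2m/r)`. -/
noncomputable def lvY (p : ℝ → ℝ) (r : ℝ) : ℝ := (1 - (8 * Real.pi / r) * massInt p r)⁻¹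

/-- The variable `w = 4π r² p / (1 - 2m/r)`. -/
noncomputable def lvW (p : ℝ → ℝ) (r : ℝ) : ℝ := 4 * Real.pi * r^2 * p r * lvY p r

section

variable {p : ℝ → ℝ}

lemma massInt_hasDerivAt (hc : ContinuousOn p (Ici 0)) {r : ℝ} (hr : 0 < r) :
    HasDerivAt (massInt p) (r^2 * p r) r := by
  have hc' : ContinuousOn (fun s => s^2 * p s) (Ici 0) := (continuous_pow 2).continuousOn.mul hc
  refine intervalIntegral.integral_hasDerivAt_right ?_ ?_ ?_
  · refine (hc'.mono ?_).intervalIntegrable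
    rw [uIcc_of_le hr.le]
    exact Icc_subset_Ici_self
  · exact (hc'.mono Ioi_subset_Ici_self).stronglyMeasurableAtFilter isOpen_Ioi r hr
  · exact hc'.continuousAt (Ici_mem_nhds hr)

/-- In the variable `log r`, the pair `(y, w)` solves a Lotka–Volterra system. -/
lemma lv_system (hc : ContinuousOn p (Ici 0)) {t : ℝ}
    (hode : HasDerivAt p (rhsStar p (Real.exp t)) (Real.exp t))
    (hpos : 0 < 1 - (8 * Real.pi / Real.exp t) * massInt p (Real.exp t)) :
    HasDerivAt (fun t => lvY p (Real.exp t)) (lvY p (Real.exp t) *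
        (2 * lvW p (Real.exp t) - lvY p (Real.exp t) + 1)) t ∧
      HasDerivAt (fun t => lvW p (Real.exp t))
        (lvW p (Real.exp t) * (4 - 2 * lvY p (Real.exp t))) t := by
  have hexp := Real.hasDerivAt_exp t
  have hr := Real.exp_pos t
  generalize hrt : Real.exp t = r at *
  have hI := massInt_hasDerivAt hc hr
  have hD : HasDerivAt (fun r => 1 - (8 * Real.pi / r) * massInt p r)
      (-(8 * Real.pi / r * (r^2 * p r) - 8 * Real.pi / r^2 * massInt p r)) r := by
    refine ((((hasDerivAt_const r (8 * Real.pi)).div (hasDerivAt_id r) hr.ne').mul hI).const_sub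
      1).congr_deriv ?_
    simp only [id, Pi.div_apply]
    field_simp
    ring
  have hIY : massInt p r * (8 * Real.pi) * lvY p r = r * lvY p r - r := by
    have : lvY p r * (1 - (8 * Real.pi / r) * massInt p r) = 1 := inv_mul_cancel₀ hpos.ne'
    field_simp at this
    linear_combination -this
  have hY : HasDerivAt (lvY p) (lvY p r * (2 * lvW p r - lvY p r + 1) / r) r := by
    refine (hD.inv hpos.ne').congr_deriv ?_
    rw [div_eq_mul_inv, ← inv_pow]
    change _ * (lvY p r)^2 = _
    unfold lvW
    field_simp
    linear_combination (-lvY p r) * hIY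
  have hW : HasDerivAt (lvW p) (lvW p r * (4 - 2 * lvY p r) / r) r := by
    refine (((((hasDerivAt_pow 2 r).const_mul (4 * Real.pi))).mul hode).mul hY).congr_deriv ?_
    have hrhs : rhsStar p r = -((2 * p r) * lvY p r) *
        ((4 * Real.pi / r^2) * massInt p r + 4 * Real.pi * r * p r) := by
      unfold rhsStar lvY massInt; rw [div_eq_mul_inv]
    rw [hrhs]
    unfold lvW
    push_cast
    field_simp
    simp only [Pi.mul_apply]
    linear_combination (-4 * Real.pi * r * p r * lvY p r) * hIY
  constructor
  · have h := HasDerivAt.comp t (h₂ := lvY p) (by rw [hrt]; exact hY) (hrt ▸ hexp)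
    refine h.congr_deriv ?_
    rw [hrt]; field_simp
  · have h := HasDerivAt.comp t (h₂ := lvW p) (by rw [hrt]; exact hW) (hrt ▸ hexp)
    refine h.congr_deriv ?_
    rw [hrt]; field_simp

lemma massInt_abs_le {P R : ℝ} (hP : ∀ s ∈ Icc 0 R, |p s| ≤ P) {r : ℝ} (hr : r ∈ Ioc 0 R) :
    |massInt p r| ≤ P * r^3 := by
  have h := intervalIntegral.norm_integral_le_of_norm_le_const (a := 0) (b := r)
    (f := fun s => s^2 * p s) (C := r^2 * P) (by
      intro s hs
      rw [uIoc_of_le hr.1.le] at hs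
      have hs1 := hP s ⟨hs.1.le, hs.2.trans hr.2⟩
      rw [Real.norm_eq_abs, abs_mul, abs_of_nonneg (sq_nonneg s)]
      exact mul_le_mul (pow_le_pow_left₀ hs.1.le hs.2 2) hs1 (abs_nonneg _) (sq_nonneg _))
  rw [sub_zero, abs_of_pos hr.1, Real.norm_eq_abs] at h
  unfold massInt
  linarith

lemma massInt_nonneg {r : ℝ} (hr : 0 < r) (hp : ∀ s ∈ Ioc 0 r, 0 < p s) (h0 : p 0 = 1) :
    0 ≤ massInt p r := by
  refine intervalIntegral.integral_nonneg hr.le fun s hs => ?_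
  rcases hs.1.eq_or_lt with h | h
  · rw [← h]; simp [h0]
  · exact mul_nonneg (sq_nonneg _) (hp s ⟨h, hs.2⟩).le

lemma good_near_zero (h0 : p 0 = 1) (hc : ContinuousOn p (Ici 0)) :
    ∃ δ > 0, ∀ r ∈ Ioc 0 δ, 0 < p r ∧ 0 < 1 - (8 * Real.pi / r) * massInt p r := by
  have hcw := hc 0 self_mem_Ici
  rw [Metric.continuousWithinAt_iff] at hcw
  obtain ⟨δ₀, hδ₀, h⟩ := hcw (1/2) (by norm_num)
  have hb : ∀ s ∈ Icc 0 (min (δ₀ / 2) (1 / 8)), |p s - 1| < 1 / 2 := by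
    intro s hs
    have := h (x := s) hs.1 (by
      rw [Real.dist_eq, sub_zero, abs_of_nonneg hs.1]
      have := hs.2.trans (min_le_left _ _)
      linarith)
    rwa [h0, Real.dist_eq] at this
  refine ⟨min (δ₀ / 2) (1 / 8), by positivity, fun r hr => ?_⟩
  have h1 := abs_lt.mp (hb r ⟨hr.1.le, hr.2⟩)
  refine ⟨by linarith, ?_⟩
  have h2 := massInt_abs_le (p := p) (P := 3 / 2) (fun s hs => by
    have := abs_lt.mp (hb s hs)
    rw [abs_le]; constructor <;> linarith) hr
  have h3 : r ≤ 1 / 8 := hr.2.trans (min_le_right _ _)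
  have hr0 := hr.1
  have h4 : 8 * Real.pi / r * massInt p r ≤ 8 * Real.pi / r * (3 / 2 * r^3) :=
    mul_le_mul_of_nonneg_left ((le_abs_self _).trans h2) (by positivity)
  have h5 : 8 * Real.pi / r * (3 / 2 * r^3) = 12 * Real.pi * r^2 := by field_simp; ring
  have h6 : r^2 ≤ (1 / 8)^2 := pow_le_pow_left₀ hr0.le h3 2
  have h7 : 12 * Real.pi * r^2 ≤ 12 * Real.pi * (1/8)^2 :=
    mul_le_mul_of_nonneg_left h6 (by positivity)
  have h8 := Real.pi_lt_four
  linarith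

/-- The pressure stays positive and `2m/r < 1` everywhere: up to a first radius at which this
fails, the Lyapunov function keeps `y` bounded and `w` away from zero. In particular the division
in `rhsStar` is never a division by zero. -/
lemma good_everywhere (h0 : p 0 = 1) (hc : ContinuousOn p (Ici 0))
    (hode : ∀ r > (0:ℝ), HasDerivAt p (rhsStar p r) r) :
    ∀ r > 0, 0 < p r ∧ 0 < 1 - (8 * Real.pi / r) * massInt p r := by
  obtain ⟨δ, hδ, hgood⟩ := good_near_zero h0 hc
  by_contra hcon
  push Not at hcon
  obtain ⟨r₁, hr₁, hbad⟩ := hcon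
  obtain ⟨D, hD⟩ : ∃ D : ℝ → ℝ, D = fun r => 1 - (8 * Real.pi / r) * massInt p r := ⟨_, rfl⟩
  have hDr : ∀ r, D r = 1 - (8 * Real.pi / r) * massInt p r := fun r => by rw [hD]
  have hDc : ∀ r > 0, ContinuousAt D r := by
    intro r hr
    rw [hD]
    exact continuousAt_const.sub ((continuousAt_const.div continuousAt_id hr.ne').mul
      (massInt_hasDerivAt hc hr).continuousAt)
  have hpc : ∀ r > 0, ContinuousAt p r := fun r hr => (hode r hr).continuousAt
  simp only [← hDr] at hgood hbad
  obtain ⟨g, hg⟩ : ∃ g : ℝ → ℝ, g = fun r => min (p r) (D r) := ⟨_, rfl⟩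
  have hgc : ∀ r > 0, ContinuousAt g r := fun r hr => hg ▸ (hpc r hr).min (hDc r hr)
  have hgpos : ∀ r, 0 < g r ↔ 0 < p r ∧ 0 < D r := fun r => by rw [hg]; exact lt_min_iff
  obtain ⟨B, hB⟩ : ∃ B : Set ℝ, B = Ici δ ∩ g ⁻¹' Iic 0 := ⟨_, rfl⟩
  have hBc : IsClosed B := by
    rw [hB]
    exact ContinuousOn.preimage_isClosed_of_isClosed
      (fun r hr => (hgc r (hδ.trans_le hr)).continuousWithinAt) isClosed_Ici isClosed_Iic
  have hbad' : g r₁ ≤ 0 := by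
    by_contra! hh
    have := (hgpos r₁).mp hh
    exact absurd this.2 (not_lt.mpr (hbad this.1))
  have hBne : B.Nonempty := by
    refine ⟨r₁, hB ▸ ⟨?_, hbad'⟩⟩
    by_contra! hh
    exact absurd ((hgpos r₁).mpr (hgood r₁ ⟨hr₁, (not_le.mp hh).le⟩)) (not_lt.mpr hbad')
  have hBb : BddBelow B := ⟨δ, fun r hr => (hB ▸ hr).1⟩
  obtain ⟨R, hR⟩ : ∃ R, R = sInf B := ⟨_, rfl⟩
  have hRB : R ∈ B := hR ▸ hBc.csInf_mem hBne hBb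
  have hRB' := hRB
  rw [hB] at hRB'
  have hδR : δ < R := by
    rcases (show δ ≤ R from hRB'.1).eq_or_lt with h | h
    · exfalso
      have h1 := (hgpos δ).mpr (hgood δ ⟨hδ, le_rfl⟩)
      rw [h] at h1
      exact absurd h1 (not_lt.mpr hRB'.2)
    · exact h
  have hlt : ∀ r, 0 < r → r < R → 0 < p r ∧ 0 < D r := by
    intro r hr hrR
    rcases le_or_gt r δ with h | h
    · exact hgood r ⟨hr, h⟩
    · rw [← hgpos]
      by_contra! hh
      have : r ∈ B := hB ▸ ⟨h.le, hh⟩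
      exact absurd (hR ▸ csInf_le hBb this) (not_le.mpr hrR)
  have hYD : ∀ r, lvY p r = (D r)⁻¹ := fun r => by rw [hDr, lvY]
  have hYpos : ∀ r, 0 < r → r < R → 0 < lvY p r := fun r h1 h2 => by
    rw [hYD]; exact inv_pos.mpr (hlt r h1 h2).2
  have hWpos : ∀ r, 0 < r → r < R → 0 < lvW p r := fun r h1 h2 => by
    have a1 := hYpos r h1 h2
    have a2 := (hlt r h1 h2).1
    unfold lvW; positivity
  obtain ⟨K, hK⟩ : ∃ K, K = lvE (lvY p δ) (lvW p δ) := ⟨_, rfl⟩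
  have hE : ∀ r ∈ Ico δ R, lvE (lvY p r) (lvW p r) ≤ K := by
    intro r hr
    have hr0 : 0 < r := hδ.trans_le hr.1
    have hmem : ∀ t ∈ Icc (Real.log δ) (Real.log r), Real.exp t < R := fun t ht => by
      have : Real.exp t ≤ r := by
        rw [← Real.exp_log hr0]; exact Real.exp_le_exp.mpr ht.2
      linarith [hr.2]
    have hsys : ∀ t ∈ Icc (Real.log δ) (Real.log r), _ := fun t ht =>
      lv_system hc (hode _ (Real.exp_pos t))
        (by rw [← hDr]; exact (hlt _ (Real.exp_pos t) (hmem t ht)).2)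
    have := lvE_le (Real.log_le_log hδ hr.1) (fun t ht => (hsys t ht).1)
      (fun t ht => (hsys t ht).2) (fun t ht => hYpos _ (Real.exp_pos t) (hmem t ht))
      (fun t ht => hWpos _ (Real.exp_pos t) (hmem t ht))
    rw [Real.exp_log hr0, Real.exp_log hδ] at this
    rwa [hK]
  have hK1 : 0 < 4 * (K + 1) := by
    have h := hE δ ⟨le_rfl, hδR⟩
    have h1 := (lv_bounds (hYpos δ hδ hδR) (hWpos δ hδ hδR) h).1
    linarith [hYpos δ hδ hδR]
  have hDlow : ∀ r ∈ Ico δ R, (4 * (K + 1))⁻¹ ≤ D r := by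
    intro r hr
    have hr0 : 0 < r := hδ.trans_le hr.1
    have h1 := (lv_bounds (hYpos r hr0 hr.2) (hWpos r hr0 hr.2) (hE r hr)).1
    rw [hYD] at h1
    exact inv_le_of_inv_le₀ (hlt r hr0 hr.2).2 h1
  obtain ⟨η, hη⟩ : ∃ η, η = Real.exp (-(K + 1)) := ⟨_, rfl⟩
  have hη0 : 0 < η := hη ▸ Real.exp_pos _
  have hplow : ∀ r ∈ Ico δ R, η * D r ≤ 8 * Real.pi * r^2 * p r := by
    intro r hr
    have hr0 : 0 < r := hδ.trans_le hr.1
    have hDp := (hlt r hr0 hr.2).2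
    have h1 := (lv_bounds (hYpos r hr0 hr.2) (hWpos r hr0 hr.2) (hE r hr)).2.2
    rw [← hη] at h1
    unfold lvW at h1
    rw [hYD] at h1
    have h2 := mul_le_mul_of_nonneg_right h1 hDp.le
    have h3 : 2 * (4 * Real.pi * r^2 * p r * (D r)⁻¹) * D r = 8 * Real.pi * r^2 * p r := by
      field_simp; ring
    linarith
  -- both lower bounds pass to the limit `r → R`
  have hR0 : 0 < R := hδ.trans hδR
  have hev : ∀ᶠ r in nhdsWithin R (Iio R), r ∈ Ico δ R := Ico_mem_nhdsLT hδR
  have hDR : (4 * (K + 1))⁻¹ ≤ D R :=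
    ge_of_tendsto ((hDc R hR0).tendsto.mono_left nhdsWithin_le_nhds) (hev.mono hDlow)
  have hDR0 : 0 < D R := (inv_pos.mpr hK1).trans_le hDR
  have hpR : η * D R ≤ 8 * Real.pi * R^2 * p R := by
    refine le_of_tendsto_of_tendsto
      ((continuousAt_const.mul (hDc R hR0)).tendsto.mono_left nhdsWithin_le_nhds)
      (((continuousAt_const.mul (continuousAt_id.pow 2)).mul (hpc R hR0)).tendsto.mono_left
        nhdsWithin_le_nhds) (hev.mono hplow)
  have hpR0 : 0 < p R := by
    have : 0 < 8 * Real.pi * R^2 * p R := (mul_pos hη0 hDR0).trans_le hpR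
    exact (pos_iff_pos_of_mul_pos this).mp (by positivity)
  exact absurd ((hgpos R).mpr ⟨hpR0, hDR0⟩) (not_lt.mpr hRB'.2)

end

/-! ### Decay in the radius -/

/-- Asymptotics of the massless solution `p*_0` (with `ρ*_0 = p*_0` and
`m*_0(r) = 4π∫₀^r s² p*_0`): for every `γ ∈ (0,1)` there is `C > 0` with
`|r² ρ*_0(r) − 1/(16π)| + |m*_0(r)/r − 1/4| ≤ C r^{−γ}` for all `r > 0`. -/
theorem massless_asymptotics (p0 : ℝ → ℝ)
    (h0 : p0 0 = 1) (hcont : ContinuousOn p0 (Set.Ici 0))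
    (hode : ∀ r > (0:ℝ), HasDerivAt p0 (rhsStar p0 r) r) :
    ∀ γ ∈ Set.Ioo (0:ℝ) 1, ∃ C > (0:ℝ), ∀ r > (0:ℝ),
      |r^2 * p0 r - 1/(16 * Real.pi)| +
        |(4 * Real.pi * ∫ s in (0:ℝ)..r, s^2 * p0 s) / r - 1/4| ≤ C * r ^ (-γ) := by
  intro γ hγ
  have hgood := good_everywhere h0 hcont hode
  have hY1 : ∀ r > 0, 1 ≤ lvY p0 r := by
    intro r hr
    have hm := massInt_nonneg hr (fun s hs => (hgood s hs.1).1) h0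
    have hm' : 0 ≤ (8 * Real.pi / r) * massInt p0 r := by positivity
    exact (one_le_inv₀ (hgood r hr).2).mpr (by linarith)
  have hW0 : ∀ r > 0, 0 < lvW p0 r := by
    intro r hr
    have a1 := hY1 r hr
    have a2 := (hgood r hr).1
    unfold lvW; positivity
  have hsys := fun t => lv_system hcont (hode _ (Real.exp_pos t)) (hgood _ (Real.exp_pos t)).2
  obtain ⟨C₁, T, hC₁, hrate⟩ := lv_rate (fun t => (hsys t).1) (fun t => (hsys t).2)
    (fun t => hY1 _ (Real.exp_pos t)) (fun t => hW0 _ (Real.exp_pos t)) hγ.2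
  have hpi := Real.pi_gt_three
  -- in terms of `a = y - 2`, `b = 2w - 1`: `m/r - 1/4 = a/(4y)`, `4π r² p - 1/4 = (2b - a)/(4y)`
  have hlarge : ∀ r ≥ Real.exp T,
      |r^2 * p0 r - 1/(16 * Real.pi)| +
        |(4 * Real.pi * ∫ s in (0:ℝ)..r, s^2 * p0 s) / r - 1/4| ≤ C₁ * r ^ (-γ) := by
    intro r hrT
    have hr : 0 < r := (Real.exp_pos T).trans_le hrT
    have h := hrate (Real.log r) ((Real.le_log_iff_exp_le hr).mpr hrT)
    simp only [Real.exp_log hr] at h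
    have hpow : Real.exp (-γ * Real.log r) = r ^ (-γ) := by
      rw [Real.rpow_def_of_pos hr, mul_comm]
    rw [hpow] at h
    have hy := hY1 r hr
    have hy0 : 0 < lvY p0 r := by linarith
    have e1 : (4 * Real.pi * massInt p0 r) / r - 1/4 = (lvY p0 r - 2) / (4 * lvY p0 r) := by
      have : lvY p0 r * (1 - (8 * Real.pi / r) * massInt p0 r) = 1 :=
        inv_mul_cancel₀ (hgood r hr).2.ne'
      field_simp at this ⊢
      linear_combination (-2) * this
    have e2 : r^2 * p0 r - 1/(16 * Real.pi)
        = (2 * (2 * lvW p0 r - 1) - (lvY p0 r - 2)) / (16 * Real.pi * lvY p0 r) := by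
      unfold lvW
      field_simp
      ring
    have b1 : |(4 * Real.pi * massInt p0 r) / r - 1/4| ≤ |lvY p0 r - 2| / 4 := by
      rw [e1, abs_div, abs_of_pos (show 0 < 4 * lvY p0 r by positivity)]
      exact div_le_div_of_nonneg_left (abs_nonneg _) (by norm_num) (by linarith)
    have b2 : |r^2 * p0 r - 1/(16 * Real.pi)|
        ≤ (2 * |2 * lvW p0 r - 1| + |lvY p0 r - 2|) / 16 := by
      rw [e2, abs_div, abs_of_pos (show 0 < 16 * Real.pi * lvY p0 r by positivity)]
      refine div_le_div₀ (by positivity) ?_ (by norm_num) (by nlinarith)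
      refine (abs_sub _ _).trans ?_
      rw [abs_mul, abs_two]
    change _ + |(4 * Real.pi * massInt p0 r) / r - 1/4| ≤ _
    have n1 := abs_nonneg (lvY p0 r - 2)
    have n2 := abs_nonneg (2 * lvW p0 r - 1)
    linarith
  obtain ⟨R, hR⟩ : ∃ R, R = Real.exp T := ⟨_, rfl⟩
  have hR0 : 0 < R := hR ▸ Real.exp_pos T
  obtain ⟨P, hP⟩ := isCompact_Icc.exists_bound_of_continuousOn
    (hcont.mono (Icc_subset_Ici_self : Icc 0 R ⊆ Ici 0))
  simp only [Real.norm_eq_abs] at hP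
  have hP0 : 0 ≤ P := (abs_nonneg _).trans (hP 0 ⟨le_rfl, hR0.le⟩)
  obtain ⟨A, hA⟩ : ∃ A, A = R^2 * P + 1 + 4 * Real.pi * P * R^2 + 1 := ⟨_, rfl⟩
  have hA0 : 0 < A := by rw [hA]; positivity
  have hsmall : ∀ r ∈ Ioc 0 R,
      |r^2 * p0 r - 1/(16 * Real.pi)| +
        |(4 * Real.pi * ∫ s in (0:ℝ)..r, s^2 * p0 s) / r - 1/4| ≤ A := by
    intro r hr
    have hr0 := hr.1
    have hr2 : r^2 ≤ R^2 := pow_le_pow_left₀ hr0.le hr.2 2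
    have b1 : |r^2 * p0 r| ≤ R^2 * P := by
      rw [abs_mul, abs_of_nonneg (sq_nonneg r)]
      exact mul_le_mul hr2 (hP r ⟨hr0.le, hr.2⟩) (abs_nonneg _) (sq_nonneg _)
    have b2 : |(4 * Real.pi * massInt p0 r) / r| ≤ 4 * Real.pi * P * R^2 := by
      rw [abs_div, abs_of_pos hr0, div_le_iff₀ hr0, abs_mul,
        abs_of_pos (show 0 < 4 * Real.pi by positivity)]
      calc 4 * Real.pi * |massInt p0 r| ≤ 4 * Real.pi * (P * r^3) :=
            mul_le_mul_of_nonneg_left (massInt_abs_le hP hr) (by positivity)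
        _ = 4 * Real.pi * P * r^2 * r := by ring
        _ ≤ 4 * Real.pi * P * R^2 * r := by gcongr
    have b3 : |1 / (16 * Real.pi)| ≤ 1 := by
      rw [abs_of_pos (by positivity), div_le_one (by positivity)]; linarith
    have b4 : |(1:ℝ) / 4| ≤ 1 := by rw [abs_of_pos] <;> norm_num
    change _ + |(4 * Real.pi * massInt p0 r) / r - 1/4| ≤ _
    have c1 := abs_sub (r^2 * p0 r) (1 / (16 * Real.pi))
    have c2 := abs_sub ((4 * Real.pi * massInt p0 r) / r) (1 / 4)
    linarith
  refine ⟨C₁ + A * R ^ γ, by positivity, fun r hr => ?_⟩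
  have hrp : 0 < r ^ (-γ) := Real.rpow_pos_of_pos hr _
  rcases le_total R r with h | h
  · refine (hlarge r (hR ▸ h)).trans (mul_le_mul_of_nonneg_right ?_ hrp.le)
    have : 0 < A * R ^ γ := by positivity
    linarith
  · refine (hsmall r ⟨hr, h⟩).trans ?_
    have h1 : 1 ≤ R ^ γ * r ^ (-γ) := by
      rw [Real.rpow_neg hr.le, ← div_eq_mul_inv, one_le_div (by positivity)]
      exact Real.rpow_le_rpow hr.le h hγ.1.le
    have h2 := mul_le_mul_of_nonneg_left h1 hA0.le
    have h3 : 0 ≤ C₁ * r ^ (-γ) := by positivity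
    linarith
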